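/- arXiv:1603.01729 — 7 statements merged into one kernel-verified Lean document; each statement's English description precedes it below -/
import Mathlib

section
/- Let Ω ⊆ {1,…,M} × {1,…,M} be a set of index pairs containing all diagonal pairs (k,k). Suppose X ∈ ℝ^{M×M} satisfies X_{kl} = 1 if k = l and X_{kl} = 0 if k ≠ l, for every (k,l) ∈ Ω (i.e., X is feasible for the constraint P_Ω(X) = I_M). Then for every decomposition X = Σ_{i=1}^m σ_i u_i v_iᵀ with σ_i ≥ 0 and unit vectors u_i, v_i ∈ ℝ^M, one has Σ_{i=1}^m σ_i ≥ M. Moreover, the identity matrix I_M is itself feasible and decomposes as I_M = Σ_{k=1}^M e_k e_kᵀ with total weight exactly M; hence the minimum nuclear norm among feasible matrices equals M and is attained at the full-rank matrix I_M. -/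
open Matrix

/-- If `Ω` contains all diagonal pairs, any matrix feasible for `P_Ω(X) = I_M` has
nuclear norm (total weight of any nonnegative unit-vector decomposition) at least `M`;
moreover the identity matrix is feasible, decomposes as `∑ₖ eₖ eₖᵀ` with total weight
exactly `M`, so the minimum nuclear norm among feasible matrices is `M`, attained at `I_M`. -/
theorem min_nuclear_norm_feasible (M : ℕ) (Ω : Set (Fin M × Fin M))
    (hdiag : ∀ k : Fin M, (k, k) ∈ Ω) :
    (∀ X : Matrix (Fin M) (Fin M) ℝ,
      (∀ kl ∈ Ω, X kl.1 kl.2 = if kl.1 = kl.2 then 1 else 0) →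
      ∀ (m : ℕ) (σ : Fin m → ℝ) (u v : Fin m → Fin M → ℝ),
        (∀ i, 0 ≤ σ i) →
        (∀ i, ∑ k, (u i k) ^ 2 = 1) →
        (∀ i, ∑ k, (v i k) ^ 2 = 1) →
        X = ∑ i, σ i • vecMulVec (u i) (v i) →
        (M : ℝ) ≤ ∑ i, σ i)
    ∧ (∀ kl ∈ Ω, (1 : Matrix (Fin M) (Fin M) ℝ) kl.1 kl.2 = if kl.1 = kl.2 then 1 else 0)
    ∧ (1 : Matrix (Fin M) (Fin M) ℝ)
        = ∑ k : Fin M, vecMulVec (Pi.single k (1 : ℝ)) (Pi.single k (1 : ℝ))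
    ∧ ∑ _k : Fin M, (1 : ℝ) = M := by
  refine ⟨?_, ?_, ?_, ?_⟩
  · intro X hX m σ u v hσ hu hv h
    have h1 : ∀ k, ∑ i, σ i * (u i k * v i k) = 1 := by
      intro k
      have h2 := hX (k, k) (hdiag k)
      rw [h] at h2
      simpa [Matrix.sum_apply, Matrix.vecMulVec_apply] using h2
    have h3 : (M : ℝ) = ∑ i, σ i * ∑ k, u i k * v i k := by
      simp_rw [Finset.mul_sum]
      rw [Finset.sum_comm]
      simp [h1]
    rw [h3]
    refine Finset.sum_le_sum fun i _ => ?_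
    have h4 : ∑ k, u i k * v i k ≤ ∑ k, ((u i k) ^ 2 + (v i k) ^ 2) / 2 :=
      Finset.sum_le_sum fun k _ => by nlinarith [sq_nonneg (u i k - v i k)]
    rw [← Finset.sum_div, Finset.sum_add_distrib, hu, hv] at h4
    nlinarith [hσ i]
  · intro kl _
    exact Matrix.one_apply
  · ext a b
    simp [Matrix.sum_apply, Matrix.vecMulVec_apply, Matrix.one_apply, Pi.single_apply]
  · simp
end

section
/- Let U, V ∈ ℝ^{M×r}, Σ ∈ ℝ^{r×r}, and let Q_U, Q_V ∈ ℝ^{r×r} be orthogonal matrices (Q_UᵀQ_U = Q_VᵀQ_V = I_r). For any triples ξ = (ξ_U, ξ_Σ, ξ_V) and ζ = (ζ_U, ζ_Σ, ζ_V) in ℝ^{M×r}×ℝ^{r×r}×ℝ^{M×r}, the Riemannian metric value is invariant under the equivalence-class transformation: g evaluated at the point (U Q_U, Q_Uᵀ Σ Q_V, V Q_V) on the transformed tangent vectors (ξ_U Q_U, Q_Uᵀ ξ_Σ Q_V, ξ_V Q_V) and (ζ_U Q_U, Q_Uᵀ ζ_Σ Q_V, ζ_V Q_V) equals g evaluated at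 (U, Σ, V) on (ξ, ζ). Explicitly, with Σ' = Q_Uᵀ Σ Q_V one has ⟨ξ_U Q_U, ζ_U Q_U Σ'Σ'ᵀ⟩ + ⟨Q_Uᵀξ_ΣQ_V, Q_Uᵀζ_ΣQ_V⟩ + ⟨ξ_V Q_V, ζ_V Q_V Σ'ᵀΣ'⟩ = ⟨ξ_U, ζ_U ΣΣᵀ⟩ + ⟨ξ_Σ, ζ_Σ⟩ + ⟨ξ_V, ζ_V ΣᵀΣ⟩. -/
open Matrix

/-- The Riemannian metric
`g(ξ,ζ) = ⟨ξ_U, ζ_U ΣΣᵀ⟩ + ⟨ξ_Σ, ζ_Σ⟩ + ⟨ξ_V, ζ_V ΣᵀΣ⟩`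
is invariant under the equivalence-class transformation
`(U, Σ, V) ↦ (U Q_U, Q_Uᵀ Σ Q_V, V Q_V)` with `Q_U, Q_V` orthogonal. -/
theorem metric_invariant (M r : ℕ)
    (U V : Matrix (Fin M) (Fin r) ℝ) (S : Matrix (Fin r) (Fin r) ℝ)
    (QU QV : Matrix (Fin r) (Fin r) ℝ)
    (hQU : QUᵀ * QU = 1) (hQV : QVᵀ * QV = 1)
    (ξU ζU ξV ζV : Matrix (Fin M) (Fin r) ℝ)
    (ξS ζS : Matrix (Fin r) (Fin r) ℝ) :
    ((ξU * QU)ᵀ * ((ζU * QU) * ((QUᵀ * S * QV) * (QUᵀ * S * QV)ᵀ))).trace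
      + ((QUᵀ * ξS * QV)ᵀ * (QUᵀ * ζS * QV)).trace
      + ((ξV * QV)ᵀ * ((ζV * QV) * ((QUᵀ * S * QV)ᵀ * (QUᵀ * S * QV)))).trace
    = (ξUᵀ * (ζU * (S * Sᵀ))).trace + (ξSᵀ * ζS).trace
      + (ξVᵀ * (ζV * (Sᵀ * S))).trace := by
  have hU : QU * QUᵀ = 1 := mul_eq_one_comm.mp hQU
  have hV : QV * QVᵀ = 1 := mul_eq_one_comm.mp hQV
  have hU' : ∀ X : Matrix (Fin r) (Fin r) ℝ, QU * (QUᵀ * X) = X := fun X => by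
    rw [← Matrix.mul_assoc, hU, Matrix.one_mul]
  have hV' : ∀ X : Matrix (Fin r) (Fin r) ℝ, QV * (QVᵀ * X) = X := fun X => by
    rw [← Matrix.mul_assoc, hV, Matrix.one_mul]
  simp only [Matrix.transpose_mul, Matrix.transpose_transpose, Matrix.mul_assoc, hU', hV']
  rw [Matrix.trace_mul_comm QUᵀ, Matrix.trace_mul_comm QVᵀ, Matrix.trace_mul_comm QVᵀ]
  simp only [Matrix.mul_assoc, hU, hV, Matrix.mul_one]
end

section
/- Let U, V ∈ ℝ^{M×r} and Σ ∈ ℝ^{r×r}, and let η = (η_U, η_Σ, η_V) ∈ ℝ^{M×r}×ℝ^{r×r}×ℝ^{M×r}. Then g(η, (UΘ₁, ΣΘ₂ − Θ₁Σ, VΘ₂)) = 0 for all skew-symmetric matrices Θ₁, Θ₂ ∈ ℝ^{r×r} if and only if both S₁ = ΣΣᵀ η_Uᵀ U − Σ η_Σᵀ and S₂ = ΣᵀΣ η_Vᵀ V + η_Σᵀ Σ are symmetric. That is, the horizontal space (the g-orthogonal complement of the vertical space) consists exactly of the triples η for which S₁ and S₂ are symmetric. -/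
open Matrix

lemma trace_skew_neg {r : ℕ} (A T : Matrix (Fin r) (Fin r) ℝ) (hT : Tᵀ = -T) :
    (Aᵀ * T).trace = -(A * T).trace := by
  rw [← Matrix.trace_transpose, Matrix.transpose_mul, Matrix.transpose_transpose, hT,
    Matrix.neg_mul, Matrix.trace_neg, Matrix.trace_mul_comm]

lemma symm_iff_trace_skew {r : ℕ} (A : Matrix (Fin r) (Fin r) ℝ) :
    (∀ T : Matrix (Fin r) (Fin r) ℝ, Tᵀ = -T → (A * T).trace = 0) ↔ Aᵀ = A := by
  constructor
  · intro h
    have hT : (A - Aᵀ)ᵀ = -(A - Aᵀ) := by simp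
    have h1 := h _ hT
    have h2 := trace_skew_neg A _ hT
    have h3 : ((A - Aᵀ)ᴴ * (A - Aᵀ)).trace = 0 := by
      rw [Matrix.conjTranspose_eq_transpose_of_trivial, hT, Matrix.neg_mul, Matrix.sub_mul,
        Matrix.trace_neg, Matrix.trace_sub, h2, h1]
      simp
    rw [Matrix.trace_conjTranspose_mul_self_eq_zero_iff] at h3
    exact (sub_eq_zero.mp h3).symm
  · intro h T hT
    have h2 := trace_skew_neg A T hT
    rw [h] at h2
    linarith

/-- Horizontal space characterization: a triple `η` is `g`-orthogonal to every vertical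
vector `(UΘ₁, ΣΘ₂ − Θ₁Σ, VΘ₂)` with `Θ₁, Θ₂` skew-symmetric iff both
`S₁ = ΣΣᵀ η_Uᵀ U − Σ η_Σᵀ` and `S₂ = ΣᵀΣ η_Vᵀ V + η_Σᵀ Σ` are symmetric. -/
theorem horizontal_space_characterization (M r : ℕ)
    (U V : Matrix (Fin M) (Fin r) ℝ) (S : Matrix (Fin r) (Fin r) ℝ)
    (ηU ηV : Matrix (Fin M) (Fin r) ℝ) (ηS : Matrix (Fin r) (Fin r) ℝ) :
    (∀ Θ₁ Θ₂ : Matrix (Fin r) (Fin r) ℝ, Θ₁ᵀ = -Θ₁ → Θ₂ᵀ = -Θ₂ →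
      (ηUᵀ * ((U * Θ₁) * (S * Sᵀ))).trace + (ηSᵀ * (S * Θ₂ - Θ₁ * S)).trace
        + (ηVᵀ * ((V * Θ₂) * (Sᵀ * S))).trace = 0)
    ↔ ((S * Sᵀ * ηUᵀ * U - S * ηSᵀ)ᵀ = S * Sᵀ * ηUᵀ * U - S * ηSᵀ
        ∧ (Sᵀ * S * ηVᵀ * V + ηSᵀ * S)ᵀ = Sᵀ * S * ηVᵀ * V + ηSᵀ * S) := by
  have key : ∀ T₁ T₂ : Matrix (Fin r) (Fin r) ℝ,
      (ηUᵀ * ((U * T₁) * (S * Sᵀ))).trace + (ηSᵀ * (S * T₂ - T₁ * S)).trace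
        + (ηVᵀ * ((V * T₂) * (Sᵀ * S))).trace
      = ((S * Sᵀ * ηUᵀ * U - S * ηSᵀ) * T₁).trace
        + ((Sᵀ * S * ηVᵀ * V + ηSᵀ * S) * T₂).trace := by
    intro T₁ T₂
    have e1 : (ηUᵀ * ((U * T₁) * (S * Sᵀ))).trace = (S * Sᵀ * ηUᵀ * U * T₁).trace := by
      rw [← Matrix.mul_assoc, Matrix.trace_mul_comm]
      simp only [Matrix.mul_assoc]
    have e2 : (ηVᵀ * ((V * T₂) * (Sᵀ * S))).trace = (Sᵀ * S * ηVᵀ * V * T₂).trace := by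
      rw [← Matrix.mul_assoc, Matrix.trace_mul_comm]
      simp only [Matrix.mul_assoc]
    have e3 : (ηSᵀ * (T₁ * S)).trace = (S * ηSᵀ * T₁).trace := by
      rw [← Matrix.mul_assoc, Matrix.trace_mul_comm]
      simp only [Matrix.mul_assoc]
    rw [Matrix.mul_sub, Matrix.sub_mul, Matrix.add_mul, Matrix.trace_sub, Matrix.trace_sub,
      Matrix.trace_add, e1, e2, e3, ← Matrix.mul_assoc ηSᵀ S T₂]
    ring
  rw [← symm_iff_trace_skew, ← symm_iff_trace_skew]
  constructor
  · intro h
    constructor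
    · intro T hT
      have := h T 0 hT (by simp)
      rw [key] at this
      simpa using this
    · intro T hT
      have := h 0 T (by simp) hT
      rw [key] at this
      simpa using this
  · rintro ⟨h1, h2⟩ T₁ T₂ hT₁ hT₂
    rw [key, h1 T₁ hT₁, h2 T₂ hT₂, add_zero]
end

section
/- Let U, V ∈ ℝ^{M×r} have orthonormal columns (UᵀU = VᵀV = I_r) and let Σ ∈ ℝ^{r×r} be invertible. A triple ζ = (ζ_U, ζ_Σ, ζ_V) ∈ ℝ^{M×r}×ℝ^{r×r}×ℝ^{M×r} satisfies g(η, ζ) = 0 for every triple η = (η_U, η_Σ, η_V) with Uᵀη_U + η_UᵀU = 0 and Vᵀη_V + η_VᵀV = 0 (i.e., ζ lies in the normal space to the tangent space) if and only if ζ_Σ = 0 and there exist symmetric matrices B_U, B_V ∈ ℝ^{r×r} such that ζ_U = U B_U (ΣΣᵀ)^{-1} and ζ_V = V B_V (ΣᵀΣ)^{-1}. -/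
open Matrix

theorem ns_zero {m n : ℕ} (A : Matrix (Fin m) (Fin n) ℝ) (h : (Aᵀ * A).trace = 0) : A = 0 := by
  rw [← conjTranspose_eq_transpose_of_trivial] at h
  exact trace_conjTranspose_mul_self_eq_zero_iff.mp h

theorem ns_fwd {m n : ℕ} (U X : Matrix (Fin m) (Fin n) ℝ) (hU : Uᵀ * U = 1)
    (h : ∀ η : Matrix (Fin m) (Fin n) ℝ, Uᵀ * η + ηᵀ * U = 0 → (ηᵀ * X).trace = 0) :
    ∃ B : Matrix (Fin n) (Fin n) ℝ, Bᵀ = B ∧ X = U * B := by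
  refine ⟨Uᵀ * X, ?_, ?_⟩
  · generalize hB : Uᵀ * X = B
    have h2 := h (U * (B - Bᵀ)) (by
      rw [transpose_mul, ← Matrix.mul_assoc, Matrix.mul_assoc _ Uᵀ U, hU]
      simp)
    rw [transpose_mul, Matrix.mul_assoc, hB] at h2
    have h3 : ((B - Bᵀ)ᵀ * Bᵀ).trace = -((B - Bᵀ)ᵀ * B).trace := by
      rw [← trace_transpose, transpose_mul, transpose_transpose, transpose_transpose,
        trace_mul_comm, transpose_sub, transpose_transpose, ← trace_neg, ← Matrix.neg_mul, neg_sub]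
    have h4 := ns_zero (B - Bᵀ) (by
      rw [Matrix.mul_sub, trace_sub, h3, h2]; simp)
    exact (sub_eq_zero.mp h4).symm
  · generalize hE : X - U * (Uᵀ * X) = E
    have h1 : Uᵀ * E = 0 := by
      rw [← hE, Matrix.mul_sub, ← Matrix.mul_assoc Uᵀ U, hU, Matrix.one_mul, sub_self]
    have h2 : Eᵀ * U = 0 := by
      rw [← transpose_transpose U, ← transpose_mul, h1, transpose_zero]
    have h3 := h E (by rw [h1, h2, add_zero])
    have h4 := ns_zero E (by
      conv_lhs => rw [← hE]
      rw [hE, ← h3]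
      conv_lhs => enter [1, 2]; rw [← hE]
      rw [Matrix.mul_sub, ← Matrix.mul_assoc, h2, Matrix.zero_mul, sub_zero])
    exact sub_eq_zero.mp (hE.trans h4)

theorem ns_bwd {m n : ℕ} (U η : Matrix (Fin m) (Fin n) ℝ) (B : Matrix (Fin n) (Fin n) ℝ)
    (hB : Bᵀ = B) (h : Uᵀ * η + ηᵀ * U = 0) : (ηᵀ * (U * B)).trace = 0 := by
  have h1 : (ηᵀ * (U * B)).trace = (Uᵀ * η * B).trace := by
    rw [← trace_transpose, transpose_mul, transpose_mul, transpose_transpose, hB,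
      Matrix.mul_assoc, trace_mul_comm]
  have h2 : (Uᵀ * η * B).trace + (ηᵀ * (U * B)).trace = 0 := by
    rw [← Matrix.mul_assoc, ← trace_add, ← Matrix.add_mul, h]; simp
  linarith

/-- Normal space characterization: a triple `ζ` is `g`-orthogonal to every tangent
triple iff `ζ_Σ = 0` and `ζ_U = U B_U (ΣΣᵀ)⁻¹`, `ζ_V = V B_V (ΣᵀΣ)⁻¹` for some
symmetric matrices `B_U, B_V`. -/
theorem normal_space_characterization (M r : ℕ)
    (U V : Matrix (Fin M) (Fin r) ℝ) (S : Matrix (Fin r) (Fin r) ℝ)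
    (hU : Uᵀ * U = 1) (hV : Vᵀ * V = 1) (hS : IsUnit S.det)
    (ζU ζV : Matrix (Fin M) (Fin r) ℝ) (ζS : Matrix (Fin r) (Fin r) ℝ) :
    (∀ (ηU ηV : Matrix (Fin M) (Fin r) ℝ) (ηS : Matrix (Fin r) (Fin r) ℝ),
      Uᵀ * ηU + ηUᵀ * U = 0 → Vᵀ * ηV + ηVᵀ * V = 0 →
      (ηUᵀ * (ζU * (S * Sᵀ))).trace + (ηSᵀ * ζS).trace
        + (ηVᵀ * (ζV * (Sᵀ * S))).trace = 0)
    ↔ (ζS = 0 ∧ ∃ BU BV : Matrix (Fin r) (Fin r) ℝ,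
        BUᵀ = BU ∧ BVᵀ = BV ∧
        ζU = U * BU * (S * Sᵀ)⁻¹ ∧ ζV = V * BV * (Sᵀ * S)⁻¹) := by
  have d1 : IsUnit (S * Sᵀ).det := by rw [det_mul, det_transpose]; exact hS.mul hS
  have d2 : IsUnit (Sᵀ * S).det := by rw [det_mul, det_transpose]; exact hS.mul hS
  constructor
  · intro h
    refine ⟨ns_zero ζS (by simpa using h 0 0 ζS (by simp) (by simp)), ?_⟩
    obtain ⟨BU, hBU, eU⟩ := ns_fwd U (ζU * (S * Sᵀ)) hU
      (fun η hη => by simpa using h η 0 0 hη (by simp))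
    obtain ⟨BV, hBV, eV⟩ := ns_fwd V (ζV * (Sᵀ * S)) hV
      (fun η hη => by simpa using h 0 η 0 (by simp) hη)
    refine ⟨BU, BV, hBU, hBV, ?_, ?_⟩
    · rw [← eU, mul_nonsing_inv_cancel_right _ _ d1]
    · rw [← eV, mul_nonsing_inv_cancel_right _ _ d2]
  · rintro ⟨rfl, BU, BV, hBU, hBV, rfl, rfl⟩ ηU ηV ηS h1 h2
    rw [nonsing_inv_mul_cancel_right _ _ d1, nonsing_inv_mul_cancel_right _ _ d2,
      ns_bwd U ηU BU hBU h1, ns_bwd V ηV BV hBV h2]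
    simp
end

section
/- Let U, V ∈ ℝ^{M×r} have orthonormal columns (UᵀU = VᵀV = I_r), let Σ ∈ ℝ^{r×r} be invertible, and let (A_U, A_Σ, A_V) ∈ ℝ^{M×r}×ℝ^{r×r}×ℝ^{M×r} be arbitrary. Suppose B_U, B_V ∈ ℝ^{r×r} are symmetric solutions of the Lyapunov equations ΣΣᵀ B_U + B_U ΣΣᵀ = ΣΣᵀ (UᵀA_U + A_UᵀU) ΣΣᵀ and ΣᵀΣ B_V + B_V ΣᵀΣ = ΣᵀΣ (VᵀA_V + A_VᵀV) ΣᵀΣ. Define ξ_U = A_U − U B_U (ΣΣᵀ)^{-1}, ξ_Σ = A_Σ, ξ_V = A_V − V B_V (ΣᵀΣ)^{-1}. Then: (i) the triple ξ = (ξ_U, ξ_Σ, ξ_V) lies in the tangent space, i.e., Uᵀξ_U + ξ_UᵀU = 0 and Vᵀξ_V + ξ_VᵀV = 0; and (ii) the residual (A_U − ξ_U, A_Σ − ξ_Σ, A_V − ξ_V) = (U B_U (ΣΣᵀ)^{-1}, 0, V B_V (ΣᵀΣ)^{-1}) satisfies g(η, (A_U − ξ_U, 0, A_V − ξ_V)) =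 0 for every tangent triple η. Hence ξ is the g-orthogonal projection of (A_U, A_Σ, A_V) onto the tangent space. -/
open Matrix

theorem aux_tangent {M r : ℕ} (U A : Matrix (Fin M) (Fin r) ℝ) (P B : Matrix (Fin r) (Fin r) ℝ)
    (hU : Uᵀ * U = 1) (hP : IsUnit P.det) (hPt : Pᵀ = P) (hB : Bᵀ = B)
    (hL : P * B + B * P = P * (Uᵀ * A + Aᵀ * U) * P) :
    Uᵀ * (A - U * B * P⁻¹) + (A - U * B * P⁻¹)ᵀ * U = 0 := by
  have h1 : B * P⁻¹ + P⁻¹ * B = Uᵀ * A + Aᵀ * U := by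
    have h2 := congrArg (fun X => P⁻¹ * X * P⁻¹) hL
    simp only [Matrix.mul_add, Matrix.add_mul] at h2
    simp only [Matrix.mul_assoc, Matrix.mul_nonsing_inv _ hP, Matrix.mul_one,
      Matrix.nonsing_inv_mul_cancel_left _ _ hP] at h2
    exact h2
  have e1 : Uᵀ * (U * B * P⁻¹) = B * P⁻¹ := by
    rw [← Matrix.mul_assoc, ← Matrix.mul_assoc, hU, Matrix.one_mul]
  have e2 : (U * B * P⁻¹)ᵀ * U = P⁻¹ * B := by
    rw [Matrix.transpose_mul, Matrix.transpose_mul, Matrix.transpose_nonsing_inv, hPt, hB,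
      Matrix.mul_assoc, Matrix.mul_assoc, hU, Matrix.mul_one]
  rw [Matrix.mul_sub, Matrix.transpose_sub, Matrix.sub_mul, e1, e2,
    sub_add_sub_comm, h1, sub_self]

theorem aux_orth {M r : ℕ} (U E : Matrix (Fin M) (Fin r) ℝ) (P B : Matrix (Fin r) (Fin r) ℝ)
    (hP : IsUnit P.det) (hB : Bᵀ = B) (hE : Uᵀ * E + Eᵀ * U = 0) :
    (Eᵀ * ((U * B * P⁻¹) * P)).trace = 0 := by
  rw [Matrix.nonsing_inv_mul_cancel_right _ _ hP, ← Matrix.mul_assoc]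
  have h : (Eᵀ * U * B).trace = -(Eᵀ * U * B).trace := by
    conv_lhs => rw [← Matrix.trace_transpose, Matrix.transpose_mul, Matrix.transpose_mul,
      Matrix.transpose_transpose, hB, eq_neg_of_add_eq_zero_left hE, Matrix.mul_neg,
      Matrix.trace_neg, Matrix.trace_mul_comm]
  linarith

/-- Tangent space projection: if `B_U, B_V` are symmetric solutions of the Lyapunov
equations, then `ξ = (A_U − U B_U (ΣΣᵀ)⁻¹, A_Σ, A_V − V B_V (ΣᵀΣ)⁻¹)` lies in the
tangent space and the residual `(U B_U (ΣΣᵀ)⁻¹, 0, V B_V (ΣᵀΣ)⁻¹)` is `g`-orthogonal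
to every tangent triple; hence `ξ` is the `g`-orthogonal projection of
`(A_U, A_Σ, A_V)` onto the tangent space. -/
theorem tangent_space_projection (M r : ℕ)
    (U V : Matrix (Fin M) (Fin r) ℝ) (S : Matrix (Fin r) (Fin r) ℝ)
    (hU : Uᵀ * U = 1) (hV : Vᵀ * V = 1) (hS : IsUnit S.det)
    (AU AV : Matrix (Fin M) (Fin r) ℝ) (AS : Matrix (Fin r) (Fin r) ℝ)
    (BU BV : Matrix (Fin r) (Fin r) ℝ) (hBU : BUᵀ = BU) (hBV : BVᵀ = BV)
    (hLU : S * Sᵀ * BU + BU * (S * Sᵀ) = S * Sᵀ * (Uᵀ * AU + AUᵀ * U) * (S * Sᵀ))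
    (hLV : Sᵀ * S * BV + BV * (Sᵀ * S) = Sᵀ * S * (Vᵀ * AV + AVᵀ * V) * (Sᵀ * S)) :
    (Uᵀ * (AU - U * BU * (S * Sᵀ)⁻¹) + (AU - U * BU * (S * Sᵀ)⁻¹)ᵀ * U = 0)
    ∧ (Vᵀ * (AV - V * BV * (Sᵀ * S)⁻¹) + (AV - V * BV * (Sᵀ * S)⁻¹)ᵀ * V = 0)
    ∧ (AU - (AU - U * BU * (S * Sᵀ)⁻¹) = U * BU * (S * Sᵀ)⁻¹)
    ∧ (AS - AS = 0)
    ∧ (AV - (AV - V * BV * (Sᵀ * S)⁻¹) = V * BV * (Sᵀ * S)⁻¹)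
    ∧ (∀ (ηU ηV : Matrix (Fin M) (Fin r) ℝ) (ηS : Matrix (Fin r) (Fin r) ℝ),
        Uᵀ * ηU + ηUᵀ * U = 0 → Vᵀ * ηV + ηVᵀ * V = 0 →
        (ηUᵀ * ((U * BU * (S * Sᵀ)⁻¹) * (S * Sᵀ))).trace
          + (ηSᵀ * (0 : Matrix (Fin r) (Fin r) ℝ)).trace
          + (ηVᵀ * ((V * BV * (Sᵀ * S)⁻¹) * (Sᵀ * S))).trace = 0) := by
  have hP : IsUnit (S * Sᵀ).det := by
    rw [Matrix.det_mul, Matrix.det_transpose]; exact hS.mul hS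
  have hQ : IsUnit (Sᵀ * S).det := by
    rw [Matrix.det_mul, Matrix.det_transpose]; exact hS.mul hS
  refine ⟨aux_tangent U AU _ BU hU hP (by simp) hBU hLU,
    aux_tangent V AV _ BV hV hQ (by simp) hBV hLV,
    sub_sub_cancel _ _, sub_self _, sub_sub_cancel _ _, ?_⟩
  intro ηU ηV ηS h1 h2
  rw [aux_orth U ηU _ BU hP hBU h1, aux_orth V ηV _ BV hQ hBV h2]
  simp
end

section
/- Let U, V ∈ ℝ^{M×r} have orthonormal columns (UᵀU = VᵀV = I_r), let Σ ∈ ℝ^{r×r}, and let ξ = (ξ_U, ξ_Σ, ξ_V) be any triple. Suppose Θ₁, Θ₂ ∈ ℝ^{r×r} are skew-symmetric matrices solving the coupled Lyapunov equations ΣΣᵀΘ₁ + Θ₁ΣΣᵀ − ΣΘ₂Σᵀ = Skew(Uᵀξ_U ΣΣᵀ) + Skew(Σ ξ_Σᵀ) and ΣᵀΣΘ₂ + Θ₂ΣᵀΣ − ΣᵀΘ₁Σ = Skew(Vᵀξ_V ΣᵀΣ) + Skew(Σᵀ ξ_Σ). Define ζ_U = ξ_U − UΘ₁, ζ_Σ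 = ξ_Σ + Θ₁Σ − ΣΘ₂, and ζ_V = ξ_V − VΘ₂. Then the matrices S₁(ζ) = ΣΣᵀ ζ_Uᵀ U − Σ ζ_Σᵀ and S₂(ζ) = ΣᵀΣ ζ_Vᵀ V + ζ_Σᵀ Σ are symmetric; that is, ζ lies in the horizontal space, and ξ − ζ = (UΘ₁, ΣΘ₂ − Θ₁Σ, VΘ₂) is vertical. -/
open Matrix

/-- The skew-symmetric part of a square matrix: `Skew(C) = (C − Cᵀ)/2`. -/
noncomputable def skewPart {r : ℕ} (C : Matrix (Fin r) (Fin r) ℝ) : Matrix (Fin r) (Fin r) ℝ :=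
  ((2 : ℝ)⁻¹) • (C - Cᵀ)

/-- Horizontal space projection: if `Θ₁, Θ₂` are skew-symmetric solutions of the
coupled Lyapunov equations, then `ζ = (ξ_U − UΘ₁, ξ_Σ + Θ₁Σ − ΣΘ₂, ξ_V − VΘ₂)` lies
in the horizontal space (its `S₁, S₂` are symmetric) and `ξ − ζ` is vertical. -/
theorem horizontal_space_projection (M r : ℕ)
    (U V : Matrix (Fin M) (Fin r) ℝ) (S : Matrix (Fin r) (Fin r) ℝ)
    (hU : Uᵀ * U = 1) (hV : Vᵀ * V = 1)
    (ξU ξV : Matrix (Fin M) (Fin r) ℝ) (ξS : Matrix (Fin r) (Fin r) ℝ)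
    (Θ₁ Θ₂ : Matrix (Fin r) (Fin r) ℝ) (hΘ₁ : Θ₁ᵀ = -Θ₁) (hΘ₂ : Θ₂ᵀ = -Θ₂)
    (h1 : S * Sᵀ * Θ₁ + Θ₁ * (S * Sᵀ) - S * Θ₂ * Sᵀ
        = skewPart (Uᵀ * ξU * (S * Sᵀ)) + skewPart (S * ξSᵀ))
    (h2 : Sᵀ * S * Θ₂ + Θ₂ * (Sᵀ * S) - Sᵀ * Θ₁ * S
        = skewPart (Vᵀ * ξV * (Sᵀ * S)) + skewPart (Sᵀ * ξS)) :
    ((S * Sᵀ * (ξU - U * Θ₁)ᵀ * U - S * (ξS + Θ₁ * S - S * Θ₂)ᵀ)ᵀ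
        = S * Sᵀ * (ξU - U * Θ₁)ᵀ * U - S * (ξS + Θ₁ * S - S * Θ₂)ᵀ)
    ∧ ((Sᵀ * S * (ξV - V * Θ₂)ᵀ * V + (ξS + Θ₁ * S - S * Θ₂)ᵀ * S)ᵀ
        = Sᵀ * S * (ξV - V * Θ₂)ᵀ * V + (ξS + Θ₁ * S - S * Θ₂)ᵀ * S)
    ∧ (ξU - (ξU - U * Θ₁) = U * Θ₁)
    ∧ (ξS - (ξS + Θ₁ * S - S * Θ₂) = S * Θ₂ - Θ₁ * S)
    ∧ (ξV - (ξV - V * Θ₂) = V * Θ₂) := by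
  have k1 : (2 : ℝ) • (S * Sᵀ * Θ₁ + Θ₁ * (S * Sᵀ) - S * Θ₂ * Sᵀ)
      = (Uᵀ * ξU * (S * Sᵀ) - (Uᵀ * ξU * (S * Sᵀ))ᵀ) + (S * ξSᵀ - (S * ξSᵀ)ᵀ) := by
    rw [h1, skewPart, skewPart, smul_add, smul_smul, smul_smul]
    norm_num
  have k2 : (2 : ℝ) • (Sᵀ * S * Θ₂ + Θ₂ * (Sᵀ * S) - Sᵀ * Θ₁ * S)
      = (Vᵀ * ξV * (Sᵀ * S) - (Vᵀ * ξV * (Sᵀ * S))ᵀ) + (Sᵀ * ξS - (Sᵀ * ξS)ᵀ) := by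
    rw [h2, skewPart, skewPart, smul_add, smul_smul, smul_smul]
    norm_num
  rw [two_smul] at k1 k2
  refine ⟨?_, ?_, by abel, by abel, by abel⟩
  · rw [← sub_eq_zero] at k1 ⊢
    rw [← neg_eq_zero, ← k1]
    simp only [transpose_neg, transpose_sub, transpose_add, transpose_mul, transpose_transpose, hΘ₁, hΘ₂,
      Matrix.mul_sub, Matrix.sub_mul, Matrix.mul_add, Matrix.add_mul, Matrix.neg_mul,
      Matrix.mul_neg, Matrix.mul_assoc, hU, Matrix.mul_one]
    abel
  · rw [← sub_eq_zero] at k2 ⊢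
    rw [← neg_eq_zero, ← k2]
    simp only [transpose_neg, transpose_sub, transpose_add, transpose_mul, transpose_transpose, hΘ₁, hΘ₂,
      Matrix.mul_sub, Matrix.sub_mul, Matrix.mul_add, Matrix.add_mul, Matrix.neg_mul,
      Matrix.mul_neg, Matrix.mul_assoc, hV, Matrix.mul_one]
    abel
end

section
/- Let U, V ∈ ℝ^{M×r} have orthonormal columns (UᵀU = VᵀV = I_r), let Σ ∈ ℝ^{r×r} be invertible, and let A ∈ ℝ^{M×M} be arbitrary (the Euclidean gradient). Suppose B_U, B_V ∈ ℝ^{r×r} are symmetric solutions of the Lyapunov equations ΣΣᵀ B_U + B_U ΣΣᵀ = ΣΣᵀ Uᵀ A V Σᵀ + Σ Vᵀ Aᵀ U ΣΣᵀ and ΣᵀΣ B_V + B_V ΣᵀΣ = ΣᵀΣ Vᵀ Aᵀ U Σ + Σᵀ Uᵀ A V ΣᵀΣ. Define the Riemannian gradient triple ξ_U = A V Σᵀ (ΣΣᵀ)^{-1} − U B_U (ΣΣᵀ)^{-1}, ξ_Σ = Uᵀ A V, ξ_V = Aᵀ U Σ (ΣᵀΣ)^{-1} − V B_V (ΣᵀΣ)^{-1}.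 Then ξ = (ξ_U, ξ_Σ, ξ_V) lies in the tangent space (Uᵀξ_U + ξ_UᵀU = 0 and Vᵀξ_V + ξ_VᵀV = 0) and moreover S₁(ξ) = ΣΣᵀ ξ_Uᵀ U − Σ ξ_Σᵀ and S₂(ξ) = ΣᵀΣ ξ_Vᵀ V + ξ_Σᵀ Σ are symmetric; i.e., the Riemannian gradient is automatically horizontal, so the horizontal-space projection leaves it unchanged. In fact S₁(ξ) = −B_U. -/
open Matrix

/-- Both halves of the computation, for one Stiefel factor. -/
theorem aux_factor {M r : ℕ} (U W : Matrix (Fin M) (Fin r) ℝ)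
    (P B : Matrix (Fin r) (Fin r) ℝ) (hU : Uᵀ * U = 1) (hP : IsUnit P.det)
    (hPt : Pᵀ = P) (hB : Bᵀ = B)
    (hL : P * B + B * P = P * (Uᵀ * W) + (Wᵀ * U) * P) :
    (Uᵀ * (W * P⁻¹ - U * B * P⁻¹) + (W * P⁻¹ - U * B * P⁻¹)ᵀ * U = 0)
    ∧ P * (W * P⁻¹ - U * B * P⁻¹)ᵀ * U = Wᵀ * U - B := by
  have h1 : P * P⁻¹ = 1 := Matrix.mul_nonsing_inv P hP
  have h2 : P⁻¹ * P = 1 := Matrix.nonsing_inv_mul P hP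
  have e1 : Uᵀ * (W * P⁻¹ - U * B * P⁻¹) = (Uᵀ * W - B) * P⁻¹ := by
    rw [← Matrix.sub_mul, ← Matrix.mul_assoc, Matrix.mul_sub, ← Matrix.mul_assoc Uᵀ U B, hU,
      Matrix.one_mul]
  have e2 : (W * P⁻¹ - U * B * P⁻¹)ᵀ * U = P⁻¹ * (Wᵀ * U - B) := by
    rw [← Matrix.sub_mul, Matrix.transpose_mul, Matrix.transpose_nonsing_inv, hPt,
      Matrix.transpose_sub, Matrix.transpose_mul, hB, Matrix.mul_assoc, Matrix.sub_mul,
      Matrix.mul_assoc B, hU, Matrix.mul_one]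
  refine ⟨?_, ?_⟩
  · rw [e1, e2]
    have h3 : P * (Uᵀ * W - B) + (Wᵀ * U - B) * P = 0 := by
      rw [Matrix.mul_sub, Matrix.sub_mul]
      have := sub_eq_zero.mpr hL.symm
      rw [← this]; abel
    calc (Uᵀ * W - B) * P⁻¹ + P⁻¹ * (Wᵀ * U - B)
        = (P⁻¹ * P) * (Uᵀ * W - B) * P⁻¹ + P⁻¹ * (Wᵀ * U - B) * (P * P⁻¹) := by
          rw [h1, h2, Matrix.one_mul, Matrix.mul_one]
      _ = P⁻¹ * (P * (Uᵀ * W - B) + (Wᵀ * U - B) * P) * P⁻¹ := by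
          simp only [Matrix.mul_add, Matrix.add_mul, Matrix.mul_assoc]
      _ = 0 := by rw [h3, Matrix.mul_zero, Matrix.zero_mul]
  · rw [Matrix.mul_assoc, e2, ← Matrix.mul_assoc, h1, Matrix.one_mul]

/-- The Riemannian gradient triple
`ξ = (A V Σᵀ (ΣΣᵀ)⁻¹ − U B_U (ΣΣᵀ)⁻¹, Uᵀ A V, Aᵀ U Σ (ΣᵀΣ)⁻¹ − V B_V (ΣᵀΣ)⁻¹)`
lies in the tangent space and is automatically horizontal (`S₁(ξ)` and `S₂(ξ)` are
symmetric); in fact `S₁(ξ) = −B_U`. -/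
theorem riemannian_gradient_horizontal (M r : ℕ)
    (U V : Matrix (Fin M) (Fin r) ℝ) (S : Matrix (Fin r) (Fin r) ℝ)
    (hU : Uᵀ * U = 1) (hV : Vᵀ * V = 1) (hS : IsUnit S.det)
    (A : Matrix (Fin M) (Fin M) ℝ)
    (BU BV : Matrix (Fin r) (Fin r) ℝ) (hBU : BUᵀ = BU) (hBV : BVᵀ = BV)
    (hLU : S * Sᵀ * BU + BU * (S * Sᵀ)
        = S * Sᵀ * Uᵀ * A * V * Sᵀ + S * Vᵀ * Aᵀ * U * (S * Sᵀ))
    (hLV : Sᵀ * S * BV + BV * (Sᵀ * S)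
        = Sᵀ * S * Vᵀ * Aᵀ * U * S + Sᵀ * Uᵀ * A * V * (Sᵀ * S)) :
    (Uᵀ * (A * V * Sᵀ * (S * Sᵀ)⁻¹ - U * BU * (S * Sᵀ)⁻¹)
        + (A * V * Sᵀ * (S * Sᵀ)⁻¹ - U * BU * (S * Sᵀ)⁻¹)ᵀ * U = 0)
    ∧ (Vᵀ * (Aᵀ * U * S * (Sᵀ * S)⁻¹ - V * BV * (Sᵀ * S)⁻¹)
        + (Aᵀ * U * S * (Sᵀ * S)⁻¹ - V * BV * (Sᵀ * S)⁻¹)ᵀ * V = 0)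
    ∧ ((S * Sᵀ * (A * V * Sᵀ * (S * Sᵀ)⁻¹ - U * BU * (S * Sᵀ)⁻¹)ᵀ * U
          - S * (Uᵀ * A * V)ᵀ)ᵀ
        = S * Sᵀ * (A * V * Sᵀ * (S * Sᵀ)⁻¹ - U * BU * (S * Sᵀ)⁻¹)ᵀ * U
          - S * (Uᵀ * A * V)ᵀ)
    ∧ ((Sᵀ * S * (Aᵀ * U * S * (Sᵀ * S)⁻¹ - V * BV * (Sᵀ * S)⁻¹)ᵀ * V
          + (Uᵀ * A * V)ᵀ * S)ᵀ
        = Sᵀ * S * (Aᵀ * U * S * (Sᵀ * S)⁻¹ - V * BV * (Sᵀ * S)⁻¹)ᵀ * V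
          + (Uᵀ * A * V)ᵀ * S)
    ∧ (S * Sᵀ * (A * V * Sᵀ * (S * Sᵀ)⁻¹ - U * BU * (S * Sᵀ)⁻¹)ᵀ * U
          - S * (Uᵀ * A * V)ᵀ = -BU) := by
  have hSt : IsUnit Sᵀ.det := by rwa [Matrix.det_transpose]
  obtain ⟨a1, a2⟩ := aux_factor U (A * V * Sᵀ) (S * Sᵀ) BU hU
    (by rw [Matrix.det_mul]; exact hS.mul hSt) (by simp) hBU
    (by rw [hLU]; simp only [Matrix.transpose_mul, Matrix.transpose_transpose, Matrix.mul_assoc])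
  obtain ⟨b1, b2⟩ := aux_factor V (Aᵀ * U * S) (Sᵀ * S) BV hV
    (by rw [Matrix.det_mul]; exact hSt.mul hS) (by simp) hBV
    (by rw [hLV]; simp only [Matrix.transpose_mul, Matrix.transpose_transpose, Matrix.mul_assoc])
  have c : S * Sᵀ * (A * V * Sᵀ * (S * Sᵀ)⁻¹ - U * BU * (S * Sᵀ)⁻¹)ᵀ * U
          - S * (Uᵀ * A * V)ᵀ = -BU := by
    rw [a2]
    simp only [Matrix.transpose_mul, Matrix.transpose_transpose, Matrix.mul_assoc]
    abel
  refine ⟨a1, b1, ?_, ?_, c⟩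
  · rw [c, Matrix.transpose_neg, hBU]
  · rw [b2]
    simp only [Matrix.transpose_mul, Matrix.transpose_transpose, Matrix.mul_assoc,
      Matrix.transpose_add, Matrix.transpose_sub, hBV]
    abel
end
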